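/- Let $P$ and $Q$ be associative dg-algebras over a field $k$ concentrated in non-negative degrees with $H^\bullet(P) \cong k$ and $H^\bullet(Q) \cong k$, and assume $Q$ is augmented with augmentation ideal $\bar Q$ (which is then acyclic). Then the coproduct (free product) $P * Q$ in the category of associative dg-algebras satisfies $H^\bullet(P * Q) \cong k$. -/

import Mathlib

/-- A differential graded algebra over `k`, concentrated in non-negative degrees: an
`ℕ`-graded `k`-algebra equipped with a square-zero degree `+1` differential satisfying
the graded Leibniz rule. -/
structure DGA (k : Type) [Field k] where
  A : Type
  ringA : Ring A
  algA : @Algebra k A _ ringA.toSemiring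
  grading : ℕ → @Submodule k A _ (@AddCommGroup.toAddCommMonoid _ ringA.toAddCommGroup)
    (@Algebra.toModule k A _ ringA.toSemiring algA)
  graded : @GradedAlgebra ℕ k A _ _ _ _ _ grading
  d : A →ₗ[k] A
  d_sq : d.comp d = 0
  d_deg : ∀ (i : ℕ) (a : A), a ∈ grading i → d a ∈ grading (i + 1)
  leibniz : ∀ (i : ℕ) (a : A), a ∈ grading i → ∀ b : A,
    d (a * b) = d a * b + ((-1 : k) ^ i) • (a * d b)

attribute [instance] DGA.ringA DGA.algA

/-- The (total) cohomology of a dg-algebra: `ker d / im d`. -/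
def DGA.H {k : Type} [Field k] (X : DGA k) : Type :=
  ↥(LinearMap.ker X.d) ⧸
    (Submodule.comap (LinearMap.ker X.d).subtype (LinearMap.range X.d))

noncomputable instance {k : Type} [Field k] (X : DGA k) : AddCommGroup X.H := by
  unfold DGA.H; infer_instance

noncomputable instance {k : Type} [Field k] (X : DGA k) : Module k X.H := by
  unfold DGA.H; infer_instance

/-- A homomorphism of dg-algebras: an algebra map preserving the grading and commuting
with the differentials. -/
structure DGAHom {k : Type} [Field k] (X Y : DGA k) where
  toAlg : X.A →ₐ[k] Y.A
  map_d : ∀ a : X.A, toAlg (X.d a) = Y.d (toAlg a)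
  map_grading : ∀ (i : ℕ) (a : X.A), a ∈ X.grading i → toAlg a ∈ Y.grading i

/-!
A functional `aug` on `X i` with `aug 1 = 1` which vanishes in positive degrees has a subcomplex as
its kernel. This kernel is acyclic because `H (X i) ≅ k`, so over a field `X i` contracts onto
`k · 1` by a homotopy of degree `-1`. The reduced words in letters from bases of these kernels form
a basis of the free product, and the homotopies, applied to the first letter of each word, contract
the complex `M` of words onto the empty word.

Only the universal property of `C` is given, so the action of `C` on `M` has to come from a
dg-algebra map into endomorphisms of `M`. As dg-algebras live in non-negative degrees, the target is
`B[t]` with `B = End M` and the commutator differential. The orbit of the empty word is a map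
`C → M`, and evaluating words is a retraction `M → C`, so `C` inherits the contraction of `M`.
-/

noncomputable section

section Words

variable {ι : Type*} {I : ι → Type*}

/-- Reduced words: finite sequences of letters `x : I i` in which neighbouring letters have
different types `i`. -/
def ReducedWord (I : ι → Type*) : Type _ :=
  {l : List (Σ i, I i) // l.IsChain fun x y => x.1 ≠ y.1}

namespace ReducedWord

/-- The first letter of `w`, if any, is not of type `i`. -/
def Avoids (i : ι) (w : ReducedWord I) : Prop := ∀ y ∈ w.1.head?, i ≠ y.1

variable (I) in
/-- The reduced words to which a letter of type `i` may be prepended. -/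
abbrev Tail (i : ι) : Type _ := {w : ReducedWord I // w.Avoids i}

/-- The empty word. -/
def nil : ReducedWord I := ⟨[], List.isChain_nil⟩

/-- The word `x w`. -/
def cons (i : ι) (x : I i) (w : Tail I i) : ReducedWord I :=
  ⟨⟨i, x⟩ :: w.1.1, List.isChain_cons.2 ⟨w.2, w.1.2⟩⟩

theorem cons_ne_nil (i : ι) (x : I i) (w : Tail I i) : cons i x w ≠ nil :=
  fun h => List.cons_ne_nil _ _ (congrArg Subtype.val h)

theorem avoids_nil (i : ι) : (nil : ReducedWord I).Avoids i := by simp [Avoids, nil]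

theorem avoids_cons {i c : ι} {x : I i} {w : Tail I i} : (cons i x w).Avoids c ↔ c ≠ i := by
  simp [Avoids, cons]

/-- Recursion on reduced words by their first letter. -/
@[elab_as_elim]
def consRec {motive : ReducedWord I → Sort*} (nil : motive nil)
    (cons : ∀ i x (w : Tail I i), motive w.1 → motive (cons i x w)) (w : ReducedWord I) :
    motive w :=
  List.rec (motive := fun l => ∀ hl, motive ⟨l, hl⟩) (fun _ => nil)
    (fun x l ih hl =>
      have h := List.isChain_cons.1 hl
      cons x.1 x.2 ⟨⟨l, h.2⟩, h.1⟩ (ih h.2))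
    w.1 w.2

/-- Prepend a letter of type `i` or nothing. -/
def prepend (i : ι) : (Σ _ : Tail I i, Option (I i)) → ReducedWord I
  | ⟨w, none⟩ => w.1
  | ⟨w, some x⟩ => cons i x w

theorem prepend_bijective (i : ι) : Function.Bijective (prepend (I := I) i) := by
  have cons_ne (x : I i) (w w' : Tail I i) : cons i x w ≠ w'.1 := fun h =>
    avoids_cons.1 (h ▸ w'.2) rfl
  constructor
  · rintro ⟨w, _ | x⟩ ⟨w', _ | x'⟩ h
    · obtain rfl : w = w' := Subtype.ext h
      rfl
    · exact (cons_ne x' w' w h.symm).elim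
    · exact (cons_ne x w w' h).elim
    · have lists_eq : (⟨i, x⟩ : Σ i, I i) :: w.1.1 = ⟨i, x'⟩ :: w'.1.1 := congrArg Subtype.val h
      obtain ⟨letters_eq, tails_eq⟩ := List.cons.inj lists_eq
      obtain rfl : x = x' := by simpa using letters_eq
      obtain rfl : w = w' := Subtype.ext (Subtype.ext tails_eq)
      rfl
  · intro w
    induction w using consRec with
    | nil => exact ⟨⟨⟨nil, avoids_nil i⟩, none⟩, rfl⟩
    | cons c x w _ =>
      obtain rfl | hic := eq_or_ne i c
      · exact ⟨⟨w, some x⟩, rfl⟩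
      · exact ⟨⟨⟨cons c x w, avoids_cons.2 hic⟩, none⟩, rfl⟩

end ReducedWord

/-- A basis of the unital algebra `A` consisting of `1` and of letters indexed by `I`. -/
structure UnitalBasis (k A I : Type*) [CommRing k] [Ring A] [Algebra k A] where
  basis : Module.Basis (Option I) k A
  basis_none : basis none = 1

section UnitalBasis

variable {k A I : Type*} [CommRing k] [Ring A] [Algebra k A]

/-- The basis vector of `A` with index `x`. -/
def UnitalBasis.letter (e : UnitalBasis k A I) (x : I) : A := e.basis (some x)

theorem UnitalBasis.linearMap_ext (e : UnitalBasis k A I) {V : Type*} [AddCommMonoid V] [Module k V]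
    {f g : A →ₗ[k] V} (one : f 1 = g 1) (letter : ∀ x, f (e.letter x) = g (e.letter x)) :
    f = g := by
  refine e.basis.ext fun o => ?_
  cases o with
  | none => rw [e.basis_none, one]
  | some x => exact letter x

theorem exists_unitalBasis_of_apply_one {k A : Type*} [Field k] [Ring A] [Algebra k A]
    {f : A →ₗ[k] k} (hf : f 1 = 1) :
    ∃ (I : Set (LinearMap.ker f)) (e : UnitalBasis k A I), ∀ x, f (e.letter x) = 0 := by
  let b := Module.Basis.ofVectorSpace k (LinearMap.ker f)
  let letters := (LinearMap.ker f).subtype ∘ b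
  let v : Option (Module.Basis.ofVectorSpaceIndex k (LinearMap.ker f)) → A := (·.elim 1 letters)
  have span_letters : Submodule.span k (Set.range letters) = LinearMap.ker f := by
    rw [Set.range_comp, Submodule.span_image, b.span_eq, Submodule.map_top, Submodule.range_subtype]
  have letters_independent : LinearIndependent k letters :=
    b.linearIndependent.map' _ (Submodule.ker_subtype _)
  have one_notMem : 1 ∉ Submodule.span k (Set.range letters) := by
    rw [span_letters, LinearMap.mem_ker, hf]
    exact one_ne_zero
  have v_independent : LinearIndependent k v :=
    linearIndependent_option.2 ⟨letters_independent, one_notMem⟩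
  have v_spans : ⊤ ≤ Submodule.span k (Set.range v) := by
    intro a _
    have ker_le : LinearMap.ker f ≤ Submodule.span k (Set.range v) :=
      span_letters.ge.trans (Submodule.span_mono (Set.range_comp_subset_range some v))
    have sub_mem_ker : a - f a • 1 ∈ LinearMap.ker f := by simp [hf]
    have one_mem : 1 ∈ Submodule.span k (Set.range v) := Submodule.subset_span ⟨none, rfl⟩
    simpa using add_mem (ker_le sub_mem_ker) (Submodule.smul_mem _ (f a) one_mem)
  refine ⟨_, ⟨Module.Basis.mk v_independent v_spans, Module.Basis.mk_apply ..⟩, fun x => ?_⟩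
  rw [UnitalBasis.letter, Module.Basis.mk_apply]
  exact (b x).2

end UnitalBasis

/-- The free module on the reduced words. -/
abbrev WordModule (k : Type*) [CommRing k] (I : ι → Type*) : Type _ := ReducedWord I →₀ k

namespace WordModule

open ReducedWord Finsupp

variable {k : Type*} [CommRing k] {A : ι → Type*} [∀ i, Ring (A i)] [∀ i, Algebra k (A i)]
  (e : ∀ i, UnitalBasis k (A i) (I i)) {V : Type*} [AddCommMonoid V] [Module k V]

theorem linearMap_ext {f g : WordModule k I →ₗ[k] V} (h : ∀ w, f (single w 1) = g (single w 1)) :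
    f = g :=
  lhom_ext' fun w => LinearMap.ext_ring (h w)

/-- The basis of `⨁ A i`, one summand for each `w : Tail I i`, in which `1` in the summand of `w`
corresponds to the word `w` and a letter `x` to the word `x w`. -/
def tailBasis (i : ι) : Module.Basis (ReducedWord I) k (Tail I i →₀ A i) :=
  (Finsupp.basis fun _ => (e i).basis).reindex (Equiv.ofBijective _ (prepend_bijective i))

theorem tailBasis_prepend (i : ι) (w : Tail I i) (o : Option (I i)) :
    tailBasis e i (prepend i ⟨w, o⟩) = single w ((e i).basis o) := by
  rw [tailBasis, Module.Basis.reindex_apply, coe_basis]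
  exact congrArg (fun p => single p.1 ((e i).basis p.2))
    (Equiv.ofBijective_symm_apply_apply _ (prepend_bijective i) ⟨w, o⟩)

/-- The product `a w`, for `a : A i` and a word `w` not starting with a letter of type `i`. -/
def mulWord (i : ι) (w : Tail I i) : A i →ₗ[k] WordModule k I :=
  (tailBasis e i).repr.toLinearMap ∘ₗ lsingle w

theorem mulWord_basis (i : ι) (w : Tail I i) (o : Option (I i)) :
    mulWord e i w ((e i).basis o) = single (prepend i ⟨w, o⟩) 1 := by
  simp [mulWord, ← tailBasis_prepend]

@[simp]
theorem mulWord_one (i : ι) (w : Tail I i) : mulWord e i w 1 = single w.1 1 := by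
  rw [← (e i).basis_none, mulWord_basis]
  rfl

@[simp]
theorem mulWord_letter (i : ι) (w : Tail I i) (x : I i) :
    mulWord e i w ((e i).letter x) = single (cons i x w) 1 :=
  mulWord_basis e i w (some x)

theorem linearMap_ext_mulWord (i : ι) {f g : WordModule k I →ₗ[k] V}
    (h : ∀ w a, f (mulWord e i w a) = g (mulWord e i w a)) : f = g := by
  refine linearMap_ext fun v => ?_
  obtain ⟨⟨w, o⟩, rfl⟩ := (prepend_bijective i).surjective v
  rw [← mulWord_basis e, h]

/-- The action of the factor `A i` on words by left multiplication. -/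
def act (i : ι) : A i →ₐ[k] Module.End k (WordModule k I) :=
  ((tailBasis e i).repr.conjAlgEquiv k).toAlgHom.comp (Algebra.lsmul k k (Tail I i →₀ A i))

@[simp]
theorem act_mulWord (i : ι) (w : Tail I i) (a b : A i) :
    act e i a (mulWord e i w b) = mulWord e i w (a * b) := by
  simp [act, mulWord]

theorem act_single (i : ι) (w : Tail I i) (a : A i) :
    act e i a (single w.1 1) = mulWord e i w a := by
  rw [← mulWord_one e, act_mulWord, mul_one]

variable {T : Type*} [Ring T] [Algebra k T] (f : ∀ i, A i →ₐ[k] T)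

/-- The product of the images of the letters of a word under the algebra maps `f i`. -/
def eval : WordModule k I →ₗ[k] T :=
  linearCombination k (consRec 1 fun i x _ y => f i ((e i).letter x) * y)

theorem eval_nil : eval e f (single nil 1) = 1 :=
  (linearCombination_single ..).trans (one_smul ..)

theorem eval_cons (i : ι) (x : I i) (w : Tail I i) :
    eval e f (single (cons i x w) 1) = f i ((e i).letter x) * eval e f (single w.1 1) := by
  simp only [eval, linearCombination_single, one_smul]
  rfl

theorem eval_mulWord (i : ι) (w : Tail I i) (a : A i) :
    eval e f (mulWord e i w a) = f i a * eval e f (single w.1 1) := by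
  have maps_eq : eval e f ∘ₗ mulWord e i w =
      LinearMap.mulRight k (eval e f (single w.1 1)) ∘ₗ (f i).toLinearMap :=
    (e i).linearMap_ext (by simp) (by simp [eval_cons])
  exact LinearMap.congr_fun maps_eq a

theorem eval_act (i : ι) (a : A i) (v : WordModule k I) :
    eval e f (act e i a v) = f i a * eval e f v := by
  have maps_eq : eval e f ∘ₗ act e i a = LinearMap.mulLeft k (f i a) ∘ₗ eval e f :=
    linearMap_ext_mulWord e i fun w b => by simp [eval_mulWord, mul_assoc]
  exact LinearMap.congr_fun maps_eq v

end WordModule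

end Words

open Polynomial

section Commutator

variable {k B : Type*} [CommRing k] [Ring B] [Algebra k B]

variable (k B) in
/-- The monomials `b tⁿ`, as the homogeneous component of degree `n` of `B[t]`. -/
def monomialSubmodule (n : ℕ) : Submodule k B[X] :=
  LinearMap.range ((monomial n : B →ₗ[B] B[X]).restrictScalars k)

instance : GradedAlgebra (monomialSubmodule k B) where
  one_mem := ⟨1, rfl⟩
  mul_mem := by
    rintro i j _ _ ⟨a, rfl⟩ ⟨b, rfl⟩
    exact ⟨a * b, (monomial_mul_monomial i j a b).symm⟩
  toDecomposition :=
    let component (n : ℕ) : B →ₗ[k] DirectSum ℕ fun n => monomialSubmodule k B n :=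
      DirectSum.lof k ℕ (fun n => monomialSubmodule k B n) n ∘ₗ
        ((monomial n : B →ₗ[B] B[X]).restrictScalars k).rangeRestrict
    have lsum_component (n : ℕ) (b : B) :
        Polynomial.lsum component (monomial n b) = component n b :=
      sum_monomial_index b (fun n b => component n b) (map_zero _)
    .ofLinearMap _ (Polynomial.lsum component)
      (LinearMap.ext fun p => by
        induction p using Polynomial.induction_on' with
        | add p q hp hq => rw [map_add, map_add, hp, hq]
        | monomial n b =>
          rw [LinearMap.comp_apply, lsum_component]
          exact DirectSum.coeLinearMap_lof _ _ _)
      (DirectSum.linearMap_ext _ fun n => LinearMap.ext fun ⟨_, b, hb⟩ => by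
        subst hb
        rw [LinearMap.comp_apply, LinearMap.comp_apply, DirectSum.coeLinearMap_lof]
        exact lsum_component n b)

/-- The differential `b tⁿ ↦ (δ b - (-1)ⁿ b δ) tⁿ⁺¹` on `B[t]`. -/
def commutatorD (δ : B) : B[X] →ₗ[k] B[X] :=
  Polynomial.lsum fun n => (monomial (n + 1) : B →ₗ[B] B[X]).restrictScalars k ∘ₗ
    (LinearMap.mulLeft k δ - (-1 : k) ^ n • LinearMap.mulRight k δ)

theorem commutatorD_monomial (δ : B) (n : ℕ) (b : B) :
    commutatorD (k := k) δ (monomial n b) =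
      monomial (n + 1) (δ * b - (-1 : k) ^ n • (b * δ)) :=
  sum_monomial_index b (fun n b => (monomial (n + 1) (δ * b - (-1 : k) ^ n • (b * δ)) : B[X]))
    (by simp)

theorem commutatorD_commutatorD {δ : B} (hδ : δ * δ = 0) (p : B[X]) :
    commutatorD (k := k) δ (commutatorD (k := k) δ p) = 0 := by
  induction p using Polynomial.induction_on' with
  | add p q hp hq => rw [map_add, map_add, hp, hq, add_zero]
  | monomial n b =>
    have bracket_bracket : δ * (δ * b - (-1 : k) ^ n • (b * δ)) -
        (-1 : k) ^ (n + 1) • ((δ * b - (-1 : k) ^ n • (b * δ)) * δ) = 0 := by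
      have δ_δ_b : δ * (δ * b) = 0 := by rw [← mul_assoc, hδ, zero_mul]
      simp [mul_sub, sub_mul, mul_assoc, δ_δ_b, hδ, pow_succ]
    rw [commutatorD_monomial, commutatorD_monomial, bracket_bracket, map_zero]

theorem commutatorD_monomial_mul (δ : B) (n : ℕ) (b : B) (p : B[X]) :
    commutatorD (k := k) δ (monomial n b * p) = commutatorD (k := k) δ (monomial n b) * p +
      (-1 : k) ^ n • (monomial n b * commutatorD (k := k) δ p) := by
  induction p using Polynomial.induction_on' with
  | add p q hp hq => simp only [mul_add, map_add, hp, hq, smul_add]; abel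
  | monomial m c =>
    have bracket_mul : δ * (b * c) - (-1 : k) ^ (n + m) • (b * c * δ) =
        (δ * b - (-1 : k) ^ n • (b * δ)) * c +
          (-1 : k) ^ n • (b * (δ * c - (-1 : k) ^ m • (c * δ))) := by
      simp only [mul_sub, sub_mul, smul_sub, smul_mul_assoc, mul_smul_comm, smul_smul, mul_assoc,
        pow_add]
      abel
    simp only [monomial_mul_monomial, commutatorD_monomial, smul_monomial]
    rw [add_right_comm n 1 m, ← add_assoc n m 1, ← map_add, bracket_mul]

variable (k B) in
/-- Evaluation at `t = 1`. -/
def evalOne : B[X] →ₐ[k] B :=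
  eval₂AlgHom (AlgHom.id k B) 1 fun b => Commute.one_right b

theorem evalOne_monomial (n : ℕ) (b : B) : evalOne k B (monomial n b) = b :=
  (eval₂_monomial (RingHom.id B) 1).trans (by simp)

end Commutator

theorem exists_homotopy_eq_id_of_exact {k V : Type*} [Field k] [AddCommGroup V] [Module k V]
    {d : Module.End k V} (hd : Function.Exact d d) : ∃ h : Module.End k V, d * h + h * d = 1 := by
  obtain ⟨s, hs⟩ := d.rangeRestrict.exists_rightInverse_of_surjective d.range_rangeRestrict
  obtain ⟨g, hg⟩ := s.exists_extend
  have d_g_d (x : V) : d (g (d x)) = d x := by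
    have g_eq_s : g (d x) = s (d.rangeRestrict x) := LinearMap.congr_fun hg (d.rangeRestrict x)
    rw [g_eq_s]
    exact congrArg Subtype.val (LinearMap.congr_fun hs (d.rangeRestrict x))
  have d_g_of_cycle (z : V) (hz : d z = 0) : d (g z) = z := by
    obtain ⟨x, rfl⟩ := (hd z).1 hz
    exact d_g_d x
  refine ⟨g * (1 - g * d), LinearMap.ext fun x => ?_⟩
  have h_cycle : d (x - g (d x)) = 0 := by rw [map_sub, d_g_d, sub_self]
  have d_d : d (d x) = 0 := hd.apply_apply_eq_zero x
  simp [-map_sub, d_g_of_cycle _ h_cycle, d_d]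

/-- The composite of two dg-algebra maps. -/
def DGAHom.comp {k : Type} [Field k] {X Y Z : DGA k} (g : DGAHom Y Z) (f : DGAHom X Y) :
    DGAHom X Z where
  toAlg := g.toAlg.comp f.toAlg
  map_d a := by simp [f.map_d, g.map_d]
  map_grading n a ha := g.map_grading n _ (f.map_grading n a ha)

namespace DGA

variable {k : Type} [Field k]

instance (X : DGA k) : GradedAlgebra X.grading := X.graded

section Graded

variable (X : DGA k)

@[simp]
theorem d_d (a : X.A) : X.d (X.d a) = 0 := LinearMap.congr_fun X.d_sq a

theorem one_mem_grading_zero : (1 : X.A) ∈ X.grading 0 := SetLike.GradedOne.one_mem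

@[simp]
theorem d_one : X.d 1 = 0 := by
  simpa using X.leibniz 0 1 X.one_mem_grading_zero 1

variable {X}

@[elab_as_elim]
theorem homogeneous_induction {motive : X.A → Prop} (a : X.A)
    (homogeneous : ∀ (n : ℕ) (a : X.A), a ∈ X.grading n → motive a)
    (add : ∀ a b, motive a → motive b → motive (a + b)) : motive a :=
  DirectSum.Decomposition.inductionOn X.grading (homogeneous 0 0 (zero_mem _))
    (fun {n} a => homogeneous n a a.2) add a

variable (X)

/-- The linear map with prescribed restriction to each homogeneous component. -/
def linearMapOfPieces {V : Type*} [AddCommMonoid V] [Module k V]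
    (f : ∀ n, X.grading n →ₗ[k] V) : X.A →ₗ[k] V :=
  DirectSum.toModule k ℕ V f ∘ₗ (DirectSum.decomposeLinearEquiv X.grading).toLinearMap

theorem linearMapOfPieces_of_mem {V : Type*} [AddCommMonoid V] [Module k V]
    (f : ∀ n, X.grading n →ₗ[k] V) {n : ℕ} {a : X.A} (ha : a ∈ X.grading n) :
    X.linearMapOfPieces f a = f n ⟨a, ha⟩ := by
  lift a to X.grading n using ha
  simp [linearMapOfPieces]

/-- The coaction `a ↦ a tⁿ` (`a` of degree `n`) encoding the grading as an algebra map. -/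
def coaction : X.A →ₐ[k] X.A[X] :=
  let φ : X.A →ₗ[k] X.A[X] := X.linearMapOfPieces fun n =>
    (monomial n).restrictScalars k ∘ₗ (X.grading n).subtype
  have φ_of_mem {n : ℕ} {a : X.A} (ha : a ∈ X.grading n) : φ a = monomial n a :=
    X.linearMapOfPieces_of_mem _ ha
  .ofLinearMap φ (φ_of_mem X.one_mem_grading_zero) fun a b => by
    induction a using homogeneous_induction with
    | add a a' iha iha' => simp only [add_mul, map_add, iha, iha']
    | homogeneous i a ha =>
      induction b using homogeneous_induction with
      | add b b' ihb ihb' => simp only [mul_add, map_add, ihb, ihb']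
      | homogeneous j b hb =>
        rw [φ_of_mem ha, φ_of_mem hb, φ_of_mem (SetLike.mul_mem_graded ha hb),
          monomial_mul_monomial]

variable {X}

theorem coaction_of_mem {n : ℕ} {a : X.A} (ha : a ∈ X.grading n) :
    X.coaction a = monomial n a :=
  X.linearMapOfPieces_of_mem _ ha

/-- The sign involution `a ↦ (-1)ⁿ a` (`a` of degree `n`). -/
def sign : X.A →ₐ[k] X.A :=
  (eval₂AlgHom (AlgHom.id k X.A) (-1) fun a => (Commute.one_right a).neg_right).comp X.coaction

theorem sign_of_mem {n : ℕ} {a : X.A} (ha : a ∈ X.grading n) : sign a = (-1 : k) ^ n • a := by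
  have eval_coaction : sign a = (monomial n a).eval₂ (RingHom.id X.A) (-1) :=
    congrArg (eval₂ (RingHom.id X.A) (-1)) (coaction_of_mem ha)
  rw [eval_coaction, eval₂_monomial, RingHom.id_apply, Algebra.smul_def, map_pow, map_neg, map_one]
  exact ((Commute.neg_one_right a).pow_right n).eq

theorem d_sign (a : X.A) : X.d (sign a) = -sign (X.d a) := by
  induction a using homogeneous_induction with
  | homogeneous n a ha => simp [sign_of_mem ha, sign_of_mem (X.d_deg n a ha), pow_succ]
  | add a b iha ihb => simp only [map_add, iha, ihb, neg_add]

theorem d_mul (a b : X.A) : X.d (a * b) = X.d a * b + sign a * X.d b := by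
  induction a using homogeneous_induction with
  | homogeneous n a ha => rw [X.leibniz n a ha, sign_of_mem ha, smul_mul_assoc]
  | add a a' iha iha' => simp only [add_mul, map_add, iha, iha']; abel

theorem map_sign {X Y : DGA k} (f : DGAHom X Y) (a : X.A) :
    f.toAlg (sign a) = sign (f.toAlg a) := by
  induction a using homogeneous_induction with
  | homogeneous n a ha => rw [sign_of_mem ha, sign_of_mem (f.map_grading n a ha), map_smul]
  | add a b iha ihb => simp only [map_add, iha, ihb]

theorem proj_zero_d (x : X.A) : GradedAlgebra.proj X.grading 0 (X.d x) = 0 := by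
  induction x using homogeneous_induction with
  | homogeneous n x hx =>
    exact DirectSum.decompose_of_mem_ne X.grading (X.d_deg n x hx) n.succ_ne_zero
  | add x y ihx ihy => simp only [map_add, ihx, ihy, add_zero]

theorem proj_succ_d (n : ℕ) (x : X.A) :
    GradedAlgebra.proj X.grading (n + 1) (X.d x) = X.d (GradedAlgebra.proj X.grading n x) := by
  induction x using homogeneous_induction with
  | homogeneous m x hx =>
    simp only [GradedAlgebra.proj_apply]
    obtain rfl | hmn := eq_or_ne m n
    · rw [DirectSum.decompose_of_mem_same X.grading hx,
        DirectSum.decompose_of_mem_same X.grading (X.d_deg m x hx)]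
    · rw [DirectSum.decompose_of_mem_ne X.grading hx hmn, map_zero,
        DirectSum.decompose_of_mem_ne X.grading (X.d_deg m x hx) (by simpa using hmn)]
  | add x y ihx ihy => simp only [map_add, ihx, ihy]

theorem proj_of_mem {n : ℕ} {a : X.A} (ha : a ∈ X.grading n) :
    GradedAlgebra.proj X.grading n a = a :=
  DirectSum.decompose_of_mem_same X.grading ha

theorem one_notMem_range_d (h : (1 : X.A) ≠ 0) : 1 ∉ LinearMap.range X.d := by
  rintro ⟨x, hx⟩
  apply h
  rw [← proj_of_mem X.one_mem_grading_zero, ← hx, proj_zero_d]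

end Graded

section Cohomology

variable (X : DGA k)

/-- The cohomology class of a cocycle. -/
def cohomologyClass : LinearMap.ker X.d →ₗ[k] X.H :=
  (Submodule.comap (LinearMap.ker X.d).subtype (LinearMap.range X.d)).mkQ

variable {X}

theorem cohomologyClass_eq_zero_iff {z : LinearMap.ker X.d} :
    X.cohomologyClass z = 0 ↔ (z : X.A) ∈ LinearMap.range X.d :=
  Submodule.Quotient.mk_eq_zero _

theorem nonempty_H_equiv_iff : Nonempty (X.H ≃ₗ[k] k) ↔
    (1 : X.A) ≠ 0 ∧ ∀ z, X.d z = 0 → ∃ c : k, z - c • 1 ∈ LinearMap.range X.d := by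
  have class_surjective : Function.Surjective X.cohomologyClass := Submodule.mkQ_surjective _
  let unit : LinearMap.ker X.d := ⟨1, X.d_one⟩
  have class_unit_ne_zero (h : (1 : X.A) ≠ 0) : X.cohomologyClass unit ≠ 0 :=
    mt cohomologyClass_eq_zero_iff.1 (one_notMem_range_d h)
  have class_eq_smul_iff (z : LinearMap.ker X.d) (c : k) :
      c • X.cohomologyClass unit = X.cohomologyClass z ↔
        (z : X.A) - c • 1 ∈ LinearMap.range X.d := by
    rw [eq_comm, ← sub_eq_zero, ← map_smul, ← map_sub, cohomologyClass_eq_zero_iff]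
    rfl
  rw [(LinearEquiv.symmEquiv (R := k) (S := k) ..).nonempty_congr,
    Module.nonempty_linearEquiv_iff_finrank_eq_one]
  constructor
  · intro finrank_eq_one
    have one_ne_zero : (1 : X.A) ≠ 0 := by
      intro h
      have : Subsingleton X.A := subsingleton_of_zero_eq_one h.symm
      have : Subsingleton X.H := class_surjective.subsingleton
      simp [Module.finrank_zero_of_subsingleton] at finrank_eq_one
    refine ⟨one_ne_zero, fun z hz => ?_⟩
    obtain ⟨c, hc⟩ := (finrank_eq_one_iff_of_nonzero' _ (class_unit_ne_zero one_ne_zero)).1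
      finrank_eq_one (X.cohomologyClass ⟨z, hz⟩)
    exact ⟨c, (class_eq_smul_iff ⟨z, hz⟩ c).1 hc⟩
  · rintro ⟨one_ne_zero, cocycle_eq⟩
    refine (finrank_eq_one_iff_of_nonzero' _ (class_unit_ne_zero one_ne_zero)).2 ?_
    refine class_surjective.forall.2 fun z => ?_
    obtain ⟨c, hc⟩ := cocycle_eq z z.2
    exact ⟨c, (class_eq_smul_iff z c).2 hc⟩

theorem nonempty_H_equiv_of_homotopy {aug : X.A →ₗ[k] k} {h : X.A →ₗ[k] X.A} (aug_one : aug 1 = 1)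
    (hh : ∀ a, X.d (h a) + h (X.d a) = a - aug a • 1) : Nonempty (X.H ≃ₗ[k] k) := by
  refine nonempty_H_equiv_iff.2 ⟨?_, fun z hz => ⟨aug z, h z, ?_⟩⟩
  · rintro one_eq_zero
    simp [one_eq_zero] at aug_one
  · simpa [hz] using hh z

theorem exists_homotopy_of_H_equiv (hX : Nonempty (X.H ≃ₗ[k] k)) {aug : X.A →ₗ[k] k}
    (aug_one : aug 1 = 1) (aug_d : ∀ a, aug (X.d a) = 0) :
    ∃ h : X.A →ₗ[k] X.A, ∀ a, X.d (h a) + h (X.d a) = a - aug a • 1 := by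
  let V := LinearMap.ker aug
  let dV : Module.End k V := X.d.restrict fun a _ => aug_d a
  let e : X.A →ₗ[k] V := (LinearMap.id - aug.smulRight 1).codRestrict V fun a => by
    simp [V, aug_one]
  have coe_e (a : X.A) : (e a : X.A) = a - aug a • 1 := rfl
  have coe_dV (v : V) : (dV v : X.A) = X.d v := rfl
  have dV_e (a : X.A) : dV (e a) = e (X.d a) := Subtype.ext (by simp [coe_dV, coe_e, aug_d])
  have exact_dV : Function.Exact dV dV := by
    rintro ⟨z, hz : aug z = 0⟩
    refine ⟨fun dz => ?_, ?_⟩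
    · obtain ⟨c, x, hx⟩ := (nonempty_H_equiv_iff.1 hX).2 z (congrArg Subtype.val dz)
      have c_eq_zero : c = 0 := by simpa [aug_d, aug_one, hz] using congrArg aug hx
      exact ⟨e x, Subtype.ext (by simp [coe_dV, coe_e, hx, c_eq_zero])⟩
    · rintro ⟨x, hx⟩
      rw [← hx]
      exact Subtype.ext (X.d_d x)
  obtain ⟨hV, hhV⟩ := exists_homotopy_eq_id_of_exact exact_dV
  refine ⟨V.subtype ∘ₗ hV ∘ₗ e, fun a => ?_⟩
  have hhV_e : dV (hV (e a)) + hV (e (X.d a)) = e a := by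
    rw [← dV_e]
    exact LinearMap.congr_fun hhV (e a)
  exact congrArg Subtype.val hhV_e

end Cohomology

section Contraction

/-- A contraction of the complex `X` onto `k · 1`: a degree-zero functional `aug` splitting the
unit, and a homotopy of degree `-1` from the identity to `a ↦ aug a • 1`. The functional is not
required to be multiplicative. -/
structure Contraction (X : DGA k) where
  aug : X.A →ₗ[k] k
  homotopy : X.A →ₗ[k] X.A
  aug_one : aug 1 = 1
  aug_of_mem_succ : ∀ n, ∀ a ∈ X.grading (n + 1), aug a = 0
  homotopy_of_mem_zero : ∀ a ∈ X.grading 0, homotopy a = 0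
  homotopy_mem : ∀ n, ∀ a ∈ X.grading (n + 1), homotopy a ∈ X.grading n
  d_homotopy_add : ∀ a, X.d (homotopy a) + homotopy (X.d a) = a - aug a • 1

variable {X : DGA k}

namespace Contraction

variable (κ : Contraction X)

theorem aug_d (a : X.A) : κ.aug (X.d a) = 0 := by
  induction a using homogeneous_induction with
  | homogeneous n a ha => exact κ.aug_of_mem_succ n _ (X.d_deg n a ha)
  | add a b iha ihb => simp only [map_add, iha, ihb, add_zero]

theorem aug_sign (a : X.A) : κ.aug (sign a) = κ.aug a := by
  induction a using homogeneous_induction with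
  | homogeneous n a ha =>
    cases n with
    | zero => simp [sign_of_mem ha]
    | succ n => simp [sign_of_mem ha, κ.aug_of_mem_succ n a ha]
  | add a b iha ihb => simp only [map_add, iha, ihb]

theorem homotopy_one : κ.homotopy 1 = 0 := κ.homotopy_of_mem_zero 1 X.one_mem_grading_zero

theorem homotopy_sign (a : X.A) : κ.homotopy (sign a) = -sign (κ.homotopy a) := by
  induction a using homogeneous_induction with
  | homogeneous n a ha =>
    cases n with
    | zero => simp [sign_of_mem ha, κ.homotopy_of_mem_zero a ha]
    | succ n => simp [sign_of_mem ha, sign_of_mem (κ.homotopy_mem n a ha), pow_succ]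
  | add a b iha ihb => simp only [map_add, iha, ihb, neg_add]

end Contraction

/-- The component of degree `-1` of an endomorphism of a graded module. -/
def lowering (h : X.A →ₗ[k] X.A) : X.A →ₗ[k] X.A :=
  X.linearMapOfPieces fun
    | 0 => 0
    | n + 1 => GradedAlgebra.proj X.grading n ∘ₗ h ∘ₗ (X.grading (n + 1)).subtype

theorem lowering_of_mem_zero (h : X.A →ₗ[k] X.A) {a : X.A} (ha : a ∈ X.grading 0) :
    lowering h a = 0 :=
  X.linearMapOfPieces_of_mem _ ha

theorem lowering_of_mem_succ (h : X.A →ₗ[k] X.A) {n : ℕ} {a : X.A} (ha : a ∈ X.grading (n + 1)) :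
    lowering h a = GradedAlgebra.proj X.grading n (h a) :=
  X.linearMapOfPieces_of_mem _ ha

theorem d_lowering_add {aug : X.A →ₗ[k] k} (aug_of_mem : ∀ n, ∀ a ∈ X.grading (n + 1), aug a = 0)
    {h : X.A →ₗ[k] X.A} (hh : ∀ a, X.d (h a) + h (X.d a) = a - aug a • 1) (a : X.A) :
    X.d (lowering h a) + lowering h (X.d a) = a - aug a • 1 := by
  induction a using homogeneous_induction with
  | homogeneous n a ha =>
    rw [lowering_of_mem_succ h (X.d_deg n a ha)]
    cases n with
    | zero =>
      have mem_zero : a - aug a • 1 ∈ X.grading 0 :=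
        sub_mem ha (Submodule.smul_mem _ _ X.one_mem_grading_zero)
      rw [lowering_of_mem_zero h ha, ← proj_of_mem mem_zero, ← hh, map_add, proj_zero_d, map_zero]
    | succ n =>
      rw [lowering_of_mem_succ h ha, ← proj_succ_d, ← map_add, hh, aug_of_mem n a ha, zero_smul,
        sub_zero, proj_of_mem ha]
  | add a b iha ihb =>
    have regroup : X.d (lowering h (a + b)) + lowering h (X.d (a + b)) =
        (X.d (lowering h a) + lowering h (X.d a)) + (X.d (lowering h b) + lowering h (X.d b)) := by
      simp only [map_add]; abel
    rw [regroup, iha, ihb, map_add, add_smul]; abel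

theorem nonempty_contraction (hX : Nonempty (X.H ≃ₗ[k] k)) : Nonempty (Contraction X) := by
  obtain ⟨f, hf⟩ := Module.Projective.exists_dual_eq_one k (nonempty_H_equiv_iff.1 hX).1
  let aug : X.A →ₗ[k] k := f ∘ₗ GradedAlgebra.proj X.grading 0
  have aug_one : aug 1 = 1 := (congrArg f (proj_of_mem X.one_mem_grading_zero)).trans hf
  have aug_d (a : X.A) : aug (X.d a) = 0 := (congrArg f (proj_zero_d a)).trans (map_zero f)
  have aug_of_mem (n : ℕ) (a : X.A) (ha : a ∈ X.grading (n + 1)) : aug a = 0 :=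
    (congrArg f (DirectSum.decompose_of_mem_ne X.grading ha n.succ_ne_zero)).trans (map_zero f)
  obtain ⟨h, hh⟩ := exists_homotopy_of_H_equiv hX aug_one aug_d
  exact ⟨{
    aug, aug_one
    homotopy := lowering h
    aug_of_mem_succ := aug_of_mem
    homotopy_of_mem_zero := fun _ => lowering_of_mem_zero h
    homotopy_mem := fun n a ha => by
      rw [lowering_of_mem_succ h ha]
      exact SetLike.coe_mem _
    d_homotopy_add := d_lowering_add aug_of_mem hh }⟩

end Contraction

section Representation

variable {X : DGA k} {B E : Type} [Ring B] [Algebra k B] [Ring E] [Algebra k E] {δ : B}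

/-- The dg-algebra `B[t]` whose differential is the graded commutator with a square-zero `δ : B`.
The variable `t` records degrees: when `B` is an endomorphism algebra, which has operators of
negative degree, it takes the place of the graded algebra of endomorphisms. -/
abbrev commutatorDGA (δ : B) (hδ : δ * δ = 0) : DGA k where
  A := B[X]
  ringA := inferInstance
  algA := inferInstance
  grading := monomialSubmodule k B
  graded := inferInstance
  d := commutatorD δ
  d_sq := LinearMap.ext (commutatorD_commutatorD hδ)
  d_deg := by
    rintro n _ ⟨b, rfl⟩
    exact ⟨_, (commutatorD_monomial δ n b).symm⟩
  leibniz := by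
    rintro n _ ⟨b, rfl⟩ p
    exact commutatorD_monomial_mul δ n b p

/-- `f` turns the differential of `X` into the graded commutator with `δ`. For `B = End M` and `δ`
a differential on `M`, this says that `f` makes `M` a differential module over `X`. -/
def IsDGRep (δ : B) (f : X.A →ₐ[k] B) : Prop :=
  ∀ a, f (X.d a) = δ * f a - f (sign a) * δ

theorem IsDGRep.comp {f : X.A →ₐ[k] B} (hf : IsDGRep δ f) (φ : B →ₐ[k] E) :
    IsDGRep (φ δ) (φ.comp f) := fun a => by simp [hf a]

theorem IsDGRep.prod {δ' : E} {f : X.A →ₐ[k] B} {f' : X.A →ₐ[k] E} (hf : IsDGRep δ f)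
    (hf' : IsDGRep δ' f') : IsDGRep (δ, δ') (f.prod f') :=
  fun a => Prod.ext (hf a) (hf' a)

theorem isDGRep_lmul : IsDGRep X.d (Algebra.lmul k X.A) := fun a => LinearMap.ext fun b => by
  simp [d_mul]

/-- The dg-algebra map `a ↦ f a tⁿ` (`a` of degree `n`) of a representation. -/
def IsDGRep.toHom {f : X.A →ₐ[k] B} (hf : IsDGRep δ f) (hδ : δ * δ = 0) :
    DGAHom X (commutatorDGA δ hδ) :=
  have map_of_mem {n : ℕ} {a : X.A} (ha : a ∈ X.grading n) :
      (mapAlgHom f).comp X.coaction a = monomial n (f a) := by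
    simp [coaction_of_mem ha]
  { toAlg := (mapAlgHom f).comp X.coaction
    map_d := fun a => by
      induction a using homogeneous_induction with
      | homogeneous n a ha =>
        rw [map_of_mem ha, map_of_mem (X.d_deg n a ha), hf a, sign_of_mem ha, map_smul,
          smul_mul_assoc]
        exact (commutatorD_monomial δ n (f a)).symm
      | add a b iha ihb => simp only [map_add, iha, ihb]
    map_grading := fun n a ha => ⟨f a, (map_of_mem ha).symm⟩ }

theorem IsDGRep.evalOne_toHom {f : X.A →ₐ[k] B} (hf : IsDGRep δ f) (hδ : δ * δ = 0) (a : X.A) :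
    evalOne k B ((hf.toHom hδ).toAlg a) = f a := by
  induction a using homogeneous_induction with
  | homogeneous n a ha => simp [toHom, coaction_of_mem ha, evalOne_monomial]
  | add a b iha ihb => simp only [map_add, iha, ihb]

theorem hom_eq_monomial {hδ : δ * δ = 0} (g : DGAHom X (commutatorDGA δ hδ)) {n : ℕ} {a : X.A}
    (ha : a ∈ X.grading n) : g.toAlg a = monomial n (evalOne k B (g.toAlg a)) := by
  obtain ⟨b, hb⟩ : ∃ b, monomial n b = g.toAlg a := g.map_grading n a ha
  rw [← hb, evalOne_monomial]

theorem isDGRep_evalOne_comp {hδ : δ * δ = 0} (g : DGAHom X (commutatorDGA δ hδ)) :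
    IsDGRep δ ((evalOne k B).comp g.toAlg) := by
  intro a
  induction a using homogeneous_induction with
  | homogeneous n a ha =>
    simp only [AlgHom.comp_apply, g.map_d, sign_of_mem ha, map_smul, smul_mul_assoc]
    conv_lhs => rw [hom_eq_monomial g ha]
    exact (congrArg (evalOne k B) (commutatorD_monomial δ n _)).trans (evalOne_monomial _ _)
  | add a b iha ihb => simp only [map_add, iha, ihb, mul_add, add_mul]; abel

theorem hom_ext_evalOne {hδ : δ * δ = 0} {g g' : DGAHom X (commutatorDGA δ hδ)}
    (h : ∀ a, evalOne k B (g.toAlg a) = evalOne k B (g'.toAlg a)) (a : X.A) :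
    g.toAlg a = g'.toAlg a := by
  induction a using homogeneous_induction with
  | homogeneous n a ha => rw [hom_eq_monomial g ha, hom_eq_monomial g' ha, h]
  | add a b iha ihb => simp only [map_add, iha, ihb]

end Representation

section Coproduct

variable {ι : Type} {X : ι → DGA k} {C : DGA k}

/-- `C` is a coproduct of the family `X` of dg-algebras, with coprojections `j`. -/
def IsCoproduct (j : ∀ i, DGAHom (X i) C) : Prop :=
  ∀ (D : DGA k) (g : ∀ i, DGAHom (X i) D),
    ∃! h : DGAHom C D, ∀ i a, h.toAlg ((j i).toAlg a) = (g i).toAlg a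

namespace IsCoproduct

variable {j : ∀ i, DGAHom (X i) C} {B : Type} [Ring B] [Algebra k B] {δ : B}

theorem exists_rep (hj : IsCoproduct j) (hδ : δ * δ = 0) {f : ∀ i, (X i).A →ₐ[k] B}
    (hf : ∀ i, IsDGRep δ (f i)) :
    ∃ ρ : C.A →ₐ[k] B, IsDGRep δ ρ ∧ ∀ i a, ρ ((j i).toAlg a) = f i a := by
  obtain ⟨h, h_j, -⟩ := hj _ fun i => (hf i).toHom hδ
  refine ⟨(evalOne k B).comp h.toAlg, isDGRep_evalOne_comp h, fun i a => ?_⟩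
  rw [AlgHom.comp_apply, h_j, (hf i).evalOne_toHom]

theorem rep_ext (hj : IsCoproduct j) (hδ : δ * δ = 0) {ρ ρ' : C.A →ₐ[k] B}
    (hρ : IsDGRep δ ρ) (hρ' : IsDGRep δ ρ')
    (h : ∀ i a, ρ ((j i).toAlg a) = ρ' ((j i).toAlg a)) : ρ = ρ' := by
  have evalOne_restrict_eq (i : ι) (a : (X i).A) :
      evalOne k B ((hρ'.toHom hδ).toAlg ((j i).toAlg a)) =
        evalOne k B ((hρ.toHom hδ).toAlg ((j i).toAlg a)) := by
    rw [hρ'.evalOne_toHom, hρ.evalOne_toHom, h]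
  have restrict_eq (i : ι) (a : (X i).A) :
      (hρ'.toHom hδ).toAlg ((j i).toAlg a) = (hρ.toHom hδ).toAlg ((j i).toAlg a) :=
    hom_ext_evalOne (g := (hρ'.toHom hδ).comp (j i)) (g' := (hρ.toHom hδ).comp (j i))
      (evalOne_restrict_eq i) a
  have toHom_eq : hρ.toHom hδ = hρ'.toHom hδ :=
    (hj _ fun i => (hρ.toHom hδ).comp (j i)).unique (fun _ _ => rfl) restrict_eq
  ext c
  rw [← hρ.evalOne_toHom hδ, toHom_eq, hρ'.evalOne_toHom]

/- Commuting with `ψ` means being fixed by conjugation with the shear `(x, y) ↦ (x, y + ψ x)`. -/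
theorem equivariant (hj : IsCoproduct j) {M N : Type} [AddCommGroup M] [Module k M]
    [AddCommGroup N] [Module k N] {δ : Module.End k M} {δ' : Module.End k N}
    (hδ : δ * δ = 0) (hδ' : δ' * δ' = 0) {ρ : C.A →ₐ[k] Module.End k M}
    {ρ' : C.A →ₐ[k] Module.End k N} (hρ : IsDGRep δ ρ) (hρ' : IsDGRep δ' ρ')
    {ψ : M →ₗ[k] N} (hψ : ∀ x, ψ (δ x) = δ' (ψ x))
    (h : ∀ i a x, ψ (ρ ((j i).toAlg a) x) = ρ' ((j i).toAlg a) (ψ x)) (c : C.A) (x : M) :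
    ψ (ρ c x) = ρ' c (ψ x) := by
  let shear : (M × N) ≃ₗ[k] M × N := (LinearEquiv.refl k M).skewProd (.refl k N) ψ
  let R : C.A →ₐ[k] Module.End k (M × N) := (LinearMap.prodMapAlgHom k M N).comp (ρ.prod ρ')
  let conj := (LinearEquiv.conjAlgEquiv k shear).toAlgHom
  have conj_apply (f : Module.End k M) (g : Module.End k N) (x : M) (y : N) :
      conj (f.prodMap g) (x, y) = (f x, g (y - ψ x) + ψ (f x)) := rfl
  have conj_prodMap_eq {f : Module.End k M} {g : Module.End k N} (hfg : ∀ x, ψ (f x) = g (ψ x)) :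
      conj (f.prodMap g) = f.prodMap g := LinearMap.ext fun ⟨x, y⟩ => by
    rw [conj_apply, hfg, map_sub, sub_add_cancel]
    rfl
  have hR : IsDGRep (δ.prodMap δ') R := (hρ.prod hρ').comp (LinearMap.prodMapAlgHom k M N)
  have h_conj_R : IsDGRep (δ.prodMap δ') (conj.comp R) := by
    simpa only [conj_prodMap_eq hψ] using hR.comp conj
  have δ_sq : δ.prodMap δ' * δ.prodMap δ' = 0 := by
    rw [LinearMap.prodMap_mul, hδ, hδ', LinearMap.prodMap_zero]
  have R_eq : conj.comp R = R :=
    hj.rep_ext δ_sq h_conj_R hR fun i a => conj_prodMap_eq (h i a)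
  have apply_eq : conj ((ρ c).prodMap (ρ' c)) (x, ψ x) = (ρ c x, ρ' c (ψ x)) :=
    LinearMap.congr_fun (DFunLike.congr_fun R_eq c) (x, ψ x)
  simpa [conj_apply] using congrArg Prod.snd apply_eq

end IsCoproduct

end Coproduct

section FreeProduct

open ReducedWord WordModule Finsupp

variable {ι : Type} {X : ι → DGA k} {I : ι → Type} (e : ∀ i, UnitalBasis k (X i).A (I i))

/-- The differential of the free product in the basis of reduced words, determined by the Leibniz
rule `d (x w) = d x · w + sign x · d w`. -/
def wordD : Module.End k (WordModule k I) :=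
  linearCombination k <| consRec 0 fun i x w dw =>
    mulWord e i w ((X i).d ((e i).letter x)) + act e i (sign ((e i).letter x)) dw

@[simp]
theorem wordD_nil : wordD e (single nil 1) = 0 :=
  (linearCombination_single ..).trans (one_smul ..)

theorem wordD_cons (i : ι) (x : I i) (w : Tail I i) : wordD e (single (cons i x w) 1) =
    mulWord e i w ((X i).d ((e i).letter x)) +
      act e i (sign ((e i).letter x)) (wordD e (single w.1 1)) := by
  simp only [wordD, linearCombination_single, one_smul]
  rfl

theorem wordD_mulWord (i : ι) (w : Tail I i) (a : (X i).A) : wordD e (mulWord e i w a) =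
    mulWord e i w ((X i).d a) + act e i (sign a) (wordD e (single w.1 1)) := by
  have maps_eq : wordD e ∘ₗ mulWord e i w = mulWord e i w ∘ₗ (X i).d +
      LinearMap.applyₗ (wordD e (single w.1 1)) ∘ₗ (act e i).toLinearMap ∘ₗ sign.toLinearMap :=
    (e i).linearMap_ext (by simp) (by simp [wordD_cons])
  exact LinearMap.congr_fun maps_eq a

theorem wordD_act (i : ι) (a : (X i).A) (v : WordModule k I) :
    wordD e (act e i a v) = act e i ((X i).d a) v + act e i (sign a) (wordD e v) := by
  have maps_eq : wordD e ∘ₗ act e i a =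
      act e i ((X i).d a) + act e i (sign a) ∘ₗ wordD e :=
    linearMap_ext_mulWord e i fun w b => by simp [wordD_mulWord, d_mul, add_assoc]
  exact LinearMap.congr_fun maps_eq v

theorem wordD_mul_wordD : wordD e * wordD e = 0 := by
  refine WordModule.linearMap_ext fun w => ?_
  induction w using consRec with
  | nil => simp
  | cons i x w ih =>
    rw [Module.End.mul_apply, LinearMap.zero_apply] at ih
    simp [wordD_cons, wordD_mulWord, wordD_act, d_sign, ih]

theorem isDGRep_act (i : ι) : IsDGRep (wordD e) (act e i) :=
  fun a => LinearMap.ext fun v => by simp [wordD_act]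

theorem eval_wordD {C : DGA k} (j : ∀ i, DGAHom (X i) C) (v : WordModule k I) :
    eval e (fun i => (j i).toAlg) (wordD e v) = C.d (eval e (fun i => (j i).toAlg) v) := by
  let ψ := eval e fun i => (j i).toAlg
  have maps_eq : ψ ∘ₗ wordD e = C.d ∘ₗ ψ := WordModule.linearMap_ext fun w => by
    induction w using consRec with
    | nil => simp [ψ, eval_nil]
    | cons i x w ih =>
      rw [LinearMap.comp_apply, LinearMap.comp_apply] at ih ⊢
      simp only [ψ] at ih ⊢
      rw [wordD_cons, map_add, eval_mulWord, eval_act, ih, eval_cons, d_mul, (j i).map_d, map_sign]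
  exact LinearMap.congr_fun maps_eq v

/- The section is `c ↦ c · 1`, for the action of `C` on words provided by the universal property. -/
theorem IsCoproduct.exists_section_eval {C : DGA k} {j : ∀ i, DGAHom (X i) C}
    (hj : IsCoproduct j) : ∃ σ : C.A →ₗ[k] WordModule k I, σ 1 = single nil 1 ∧
      (∀ c, σ (C.d c) = wordD e (σ c)) ∧ ∀ c, eval e (fun i => (j i).toAlg) (σ c) = c := by
  obtain ⟨ρ, hρ, ρ_j⟩ := hj.exists_rep (wordD_mul_wordD e) (isDGRep_act e)
  have eval_equivariant (c : C.A) (v : WordModule k I) :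
      eval e (fun i => (j i).toAlg) (ρ c v) = c * eval e (fun i => (j i).toAlg) v :=
    hj.equivariant (wordD_mul_wordD e) C.d_sq hρ isDGRep_lmul (eval_wordD e j)
      (fun i a v => by rw [ρ_j]; exact eval_act ..) c v
  refine ⟨LinearMap.applyₗ (single nil 1) ∘ₗ ρ.toLinearMap, by simp, fun c => ?_, fun c => ?_⟩
  · exact (LinearMap.congr_fun (hρ c) (single nil 1)).trans (by simp)
  · exact (eval_equivariant c (single nil 1)).trans (by rw [eval_nil, mul_one])

variable (I) in
/-- The span of the words which do not start with a letter of type `i`. -/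
def wordsAvoiding (i : ι) : Submodule k (WordModule k I) :=
  Submodule.span k (Set.range fun w : Tail I i => single w.1 1)

variable {e} {κ : ∀ i, Contraction (X i)}

theorem mulWord_mem_wordsAvoiding (he : ∀ i x, (κ i).aug ((e i).letter x) = 0) {i c : ι}
    (hic : c ≠ i) (w : Tail I i) {a : (X i).A} (ha : (κ i).aug a = 0) :
    mulWord e i w a ∈ wordsAvoiding I c := by
  let q := (wordsAvoiding (k := k) I c).mkQ
  have maps_eq : q ∘ₗ mulWord e i w = (κ i).aug.smulRight (q (single w.1 1)) := by
    refine (e i).linearMap_ext (by simp [(κ i).aug_one]) fun x => ?_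
    have cons_mem : single (cons i x w) 1 ∈ wordsAvoiding (k := k) I c :=
      Submodule.subset_span ⟨⟨cons i x w, avoids_cons.2 hic⟩, rfl⟩
    simpa [he, q] using cons_mem
  refine (Submodule.Quotient.mk_eq_zero _).1 ((LinearMap.congr_fun maps_eq a).trans ?_)
  rw [LinearMap.smulRight_apply, ha, zero_smul]

theorem act_mem_wordsAvoiding (he : ∀ i x, (κ i).aug ((e i).letter x) = 0) {i c : ι}
    (hic : c ≠ i) {a : (X i).A} (ha : (κ i).aug a = 0) {v : WordModule k I}
    (hv : v ∈ wordsAvoiding I i) : act e i a v ∈ wordsAvoiding I c := by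
  have span_le : wordsAvoiding I i ≤ (wordsAvoiding I c).comap (act e i a) := by
    refine Submodule.span_le.2 ?_
    rintro _ ⟨w, rfl⟩
    rw [SetLike.mem_coe, Submodule.mem_comap, act_single]
    exact mulWord_mem_wordsAvoiding he hic w ha
  exact span_le hv

theorem wordD_mem_wordsAvoiding (he : ∀ i x, (κ i).aug ((e i).letter x) = 0) {c : ι}
    {w : ReducedWord I} (hw : w.Avoids c) : wordD e (single w 1) ∈ wordsAvoiding I c := by
  induction w using consRec generalizing c with
  | nil => simp
  | cons i x w ih =>
    have hci := avoids_cons.1 hw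
    rw [wordD_cons]
    refine add_mem (mulWord_mem_wordsAvoiding he hci w ((κ i).aug_d _))
      (act_mem_wordsAvoiding he hci ?_ (ih w.2))
    rw [(κ i).aug_sign, he]

variable (e κ)

/-- The homotopy on words contracting the first letter. -/
def wordHomotopy : Module.End k (WordModule k I) :=
  linearCombination k <| consRec 0 fun i x w _ => mulWord e i w ((κ i).homotopy ((e i).letter x))

@[simp]
theorem wordHomotopy_nil : wordHomotopy e κ (single nil 1) = 0 :=
  (linearCombination_single ..).trans (one_smul ..)

theorem wordHomotopy_cons (i : ι) (x : I i) (w : Tail I i) :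
    wordHomotopy e κ (single (cons i x w) 1) = mulWord e i w ((κ i).homotopy ((e i).letter x)) :=
  (linearCombination_single ..).trans (one_smul ..)

variable {e κ}

theorem wordHomotopy_mulWord (he : ∀ i x, (κ i).aug ((e i).letter x) = 0) (i : ι) (w : Tail I i)
    (a : (X i).A) : wordHomotopy e κ (mulWord e i w a) =
      mulWord e i w ((κ i).homotopy a) + (κ i).aug a • wordHomotopy e κ (single w.1 1) := by
  have maps_eq : wordHomotopy e κ ∘ₗ mulWord e i w = mulWord e i w ∘ₗ (κ i).homotopy +
      (κ i).aug.smulRight (wordHomotopy e κ (single w.1 1)) :=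
    (e i).linearMap_ext (by simp [(κ i).homotopy_one, (κ i).aug_one])
      (by simp [wordHomotopy_cons, he])
  exact LinearMap.congr_fun maps_eq a

theorem wordHomotopy_act (he : ∀ i x, (κ i).aug ((e i).letter x) = 0) (i : ι) (a : (X i).A)
    {v : WordModule k I} (hv : v ∈ wordsAvoiding I i) : wordHomotopy e κ (act e i a v) =
      act e i ((κ i).homotopy a) v + (κ i).aug a • wordHomotopy e κ v := by
  let rhs : Module.End k (WordModule k I) :=
    act e i ((κ i).homotopy a) + (κ i).aug a • wordHomotopy e κ
  have eqOn_words : Set.EqOn (wordHomotopy e κ ∘ₗ act e i a) rhs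
      (Set.range fun w : Tail I i => single w.1 (1 : k)) := by
    rintro _ ⟨w, rfl⟩
    simp [rhs, act_single, wordHomotopy_mulWord he]
  exact LinearMap.eqOn_span eqOn_words hv

/- In `d h + h d` the terms in which `d` meets `w` cancel, since `h` anticommutes with the sign;
`h` does not reach `w` because `d w` still avoids the type of `x`. -/
theorem wordD_wordHomotopy_cons (he : ∀ i x, (κ i).aug ((e i).letter x) = 0) (i : ι) (x : I i)
    (w : Tail I i) :
    wordD e (wordHomotopy e κ (single (cons i x w) 1)) +
      wordHomotopy e κ (wordD e (single (cons i x w) 1)) = single (cons i x w) 1 := by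
  have on_letter : mulWord e i w ((X i).d ((κ i).homotopy ((e i).letter x))) +
      mulWord e i w ((κ i).homotopy ((X i).d ((e i).letter x))) = single (cons i x w) 1 := by
    rw [← map_add, (κ i).d_homotopy_add, he, zero_smul, sub_zero, mulWord_letter]
  rw [wordHomotopy_cons, wordD_mulWord, wordD_cons, map_add, wordHomotopy_mulWord he, (κ i).aug_d,
    wordHomotopy_act he i _ (wordD_mem_wordsAvoiding he w.2), (κ i).aug_sign, he,
    (κ i).homotopy_sign, map_neg, LinearMap.neg_apply, ← on_letter]
  module

theorem wordD_wordHomotopy_add (he : ∀ i x, (κ i).aug ((e i).letter x) = 0) (v : WordModule k I) :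
    wordD e (wordHomotopy e κ v) + wordHomotopy e κ (wordD e v) = v - v nil • single nil 1 := by
  have maps_eq : wordD e ∘ₗ wordHomotopy e κ + wordHomotopy e κ ∘ₗ wordD e =
      LinearMap.id - (lapply nil).smulRight (single nil 1) := by
    refine WordModule.linearMap_ext fun w => ?_
    cases w using consRec with
    | nil => simp
    | cons i x w _ => simpa [(cons_ne_nil i x w).symm] using wordD_wordHomotopy_cons he i x w
  exact LinearMap.congr_fun maps_eq v

end FreeProduct

theorem isCoproduct_of_bool {X : Bool → DGA k} {C : DGA k} {j : ∀ b, DGAHom (X b) C}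
    (hj : ∀ (D : DGA k) (f : DGAHom (X false) D) (g : DGAHom (X true) D),
      ∃! h : DGAHom C D, (∀ a, h.toAlg ((j false).toAlg a) = f.toAlg a) ∧
        ∀ b, h.toAlg ((j true).toAlg b) = g.toAlg b) : IsCoproduct j := fun D g => by
  simpa only [Bool.forall_bool] using hj D (g false) (g true)

end DGA

theorem stmt_1_general {k : Type} [Field k] {ι : Type} {X : ι → DGA k} {C : DGA k}
    {j : ∀ i, DGAHom (X i) C} (hj : DGA.IsCoproduct j)
    (hX : ∀ i, Nonempty ((X i).H ≃ₗ[k] k)) : Nonempty (C.H ≃ₗ[k] k) := by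
  let κ (i : ι) : DGA.Contraction (X i) := (DGA.nonempty_contraction (hX i)).some
  choose I e he using fun i => exists_unitalBasis_of_apply_one (κ i).aug_one
  obtain ⟨σ, σ_one, σ_d, eval_σ⟩ := hj.exists_section_eval e
  let ψ := WordModule.eval e fun i => (j i).toAlg
  let h := DGA.wordHomotopy e κ
  refine DGA.nonempty_H_equiv_of_homotopy (aug := Finsupp.lapply .nil ∘ₗ σ) (h := ψ ∘ₗ h ∘ₗ σ)
    (by simp [σ_one]) fun c => ?_
  calc C.d (ψ (h (σ c))) + ψ (h (σ (C.d c)))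
      = ψ (DGA.wordD e (h (σ c)) + h (DGA.wordD e (σ c))) := by
        rw [map_add, DGA.eval_wordD, σ_d]
    _ = ψ (σ c - σ c .nil • Finsupp.single .nil 1) := by rw [DGA.wordD_wordHomotopy_add he]
    _ = c - σ c .nil • 1 := by rw [map_sub, map_smul, eval_σ, WordModule.eval_nil]

end

/- STATEMENT 1: Let `P`, `Q` be associative dg-algebras over a field `k`, concentrated
in non-negative degrees, with `H•(P) ≅ k` and `H•(Q) ≅ k`, and let `Q` be augmented
(by a map of dg-algebras `ε : Q → k`).  Then any coproduct (free product) `C = P * Q`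
of `P` and `Q` in the category of associative dg-algebras satisfies `H•(P * Q) ≅ k`. -/
theorem stmt_1 (k : Type) [Field k] (P Q C : DGA k)
    (hP : Nonempty (P.H ≃ₗ[k] k)) (hQ : Nonempty (Q.H ≃ₗ[k] k))
    (ε : Q.A →ₐ[k] k) (hε : ∀ a : Q.A, ε (Q.d a) = 0)
    (ι₁ : DGAHom P C) (ι₂ : DGAHom Q C)
    (hcoprod : ∀ (D : DGA k) (f : DGAHom P D) (g : DGAHom Q D),
      ∃! h : DGAHom C D,
        (∀ a : P.A, h.toAlg (ι₁.toAlg a) = f.toAlg a) ∧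
        (∀ b : Q.A, h.toAlg (ι₂.toAlg b) = g.toAlg b)) :
    Nonempty (C.H ≃ₗ[k] k) :=
  stmt_1_general (X := Bool.rec P Q) (j := Bool.rec ι₁ ι₂) (DGA.isCoproduct_of_bool hcoprod)
    (Bool.rec hP hQ)
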